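/- Let a Dirac system y_x = i(z j + j V(x)) y on [0, ∞) be given, where j = diag(I_{m₁}, −I_{m₂}), V = [[0, v],[v*, 0]] and v is an m₁×m₂ locally integrable matrix function. Then there exists exactly one Weyl function of this system, i.e., exactly one m₂×m₁ matrix function φ, holomorphic on the open upper half-plane ℂ₊, satisfying ∫₀^∞ [I_{m₁} φ(z)*] u(x,z)* u(x,z) [I_{m₁}; φ(z)] dx < ∞ for every z ∈ ℂ₊, where u(x,z) is the fundamental solution of the system normalized by u(0,z) = I_m, m = m₁ + m₂. -/

import Mathlib

open Matrix MeasureTheory Set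

/-- `j = diag(I_{m₁}, −I_{m₂})`. -/
noncomputable def jMat (m₁ m₂ : ℕ) : Matrix (Fin m₁ ⊕ Fin m₂) (Fin m₁ ⊕ Fin m₂) ℂ :=
  Matrix.fromBlocks 1 0 0 (-1)

/-- `V = [[0, v],[v*, 0]]` built out of the potential `v`. -/
noncomputable def VMat {m₁ m₂ : ℕ} (v : ℝ → Matrix (Fin m₁) (Fin m₂) ℂ) (x : ℝ) :
    Matrix (Fin m₁ ⊕ Fin m₂) (Fin m₁ ⊕ Fin m₂) ℂ :=
  Matrix.fromBlocks 0 (v x) (v x)ᴴ 0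

/-- `φ` is a Weyl function of the Dirac system with normalized fundamental solution `u`:
`φ` is holomorphic on `ℂ₊` and
`∫₀^∞ [I φ(z)*] u(x,z)* u(x,z) [I; φ(z)] dx < ∞` for every `z ∈ ℂ₊`
(finiteness of the integral of the positive semidefinite matrix integrand is expressed as
entrywise integrability on `[0,∞)`). -/
def IsWeylFunction {m₁ m₂ : ℕ}
    (u : ℝ → ℂ → Matrix (Fin m₁ ⊕ Fin m₂) (Fin m₁ ⊕ Fin m₂) ℂ)
    (φ : ℂ → Matrix (Fin m₂) (Fin m₁) ℂ) : Prop :=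
  (∀ i j, DifferentiableOn ℂ (fun z => φ z i j) {z : ℂ | 0 < z.im}) ∧
  (∀ z : ℂ, 0 < z.im → ∀ i j, IntegrableOn
    (fun x : ℝ =>
      ((Matrix.fromRows (1 : Matrix (Fin m₁) (Fin m₁) ℂ) (φ z))ᴴ * (u x z)ᴴ * u x z *
        Matrix.fromRows (1 : Matrix (Fin m₁) (Fin m₁) ℂ) (φ z)) i j)
    (Ici 0))

/-- holomorphy from a perturbation ODE -/
lemma mat_holo {R : Type*} [NormedRing R] [NormedAlgebra ℂ R] [CompleteSpace R] (U0 : R) (B : ℝ → R) (hB : ContinuousOn B (Ici 0))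
    (W : ℝ → ℂ → R) (z0 : ℂ) (hW0 : ∀ z, W 0 z = 1)
    (hW : ∀ z, ∀ x ∈ Ici (0:ℝ),
      HasDerivWithinAt (fun y => W y z) ((z - z0) • (B x * W x z)) (Ici 0) x)
    (l : ℝ) (hl : 0 ≤ l) :
    DifferentiableAt ℂ (fun z => U0 * W l z) z0 := by
  obtain ⟨b0, hb0⟩ := (isCompact_Icc (a := (0:ℝ)) (b := l)).exists_bound_of_continuousOn
    (hB.mono Icc_subset_Ici_self)
  set b := max b0 0 with hbdef
  have hbpos : 0 ≤ b := le_max_right _ _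
  have hb : ∀ x ∈ Icc (0:ℝ) l, ‖B x‖ ≤ b := fun x hx => (hb0 x hx).trans (le_max_left _ _)
  have hfb : ∀ z, ∀ x ∈ Icc (0:ℝ) l,
      ‖W x z - 1‖ ≤ gronwallBound 0 (‖z - z0‖ * b) (‖z - z0‖ * b * ‖(1 : R)‖) (x - 0) := by
    intro z
    apply norm_le_gronwallBound_of_norm_deriv_right_le
      (f' := fun x => (z - z0) • (B x * W x z))
    · intro x hx
      exact ((hW z x hx.1).continuousWithinAt.mono Icc_subset_Ici_self).sub
        continuousWithinAt_const
    · intro x hx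
      exact ((hW z x hx.1).mono (Ici_subset_Ici.2 hx.1)).sub_const _
    · simp [hW0]
    · intro x hx
      have e : W x z = (W x z - 1) + 1 := by abel
      calc ‖(z - z0) • (B x * W x z)‖ = ‖z - z0‖ * ‖B x * W x z‖ := norm_smul _ _
        _ ≤ ‖z - z0‖ * (b * (‖W x z - 1‖ + ‖(1 : R)‖)) := by
          gcongr
          refine (norm_mul_le _ _).trans ?_
          gcongr
          · exact hb x ⟨hx.1, hx.2.le⟩
          · conv_lhs => rw [e]
            exact norm_add_le _ _
        _ = _ := by ring
  set N := ‖(1 : R)‖ with hN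
  set h : ℂ → ℝ := fun z => N * (Real.exp (‖z - z0‖ * b * l) - 1) with hh
  have hfh : ∀ z, ∀ x ∈ Icc (0:ℝ) l, ‖W x z - 1‖ ≤ h z := by
    intro z x hx
    refine (hfb z x hx).trans ?_
    have e : gronwallBound 0 (‖z - z0‖ * b) (‖z - z0‖ * b * N) (x - 0)
        = N * (Real.exp (‖z - z0‖ * b * x) - 1) := by
      by_cases hK : ‖z - z0‖ * b = 0
      · rw [hK]; simp [gronwallBound_K0]
      · rw [gronwallBound_of_K_ne_0 hK]
        simp only [zero_mul, zero_add, sub_zero]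
        rw [mul_div_cancel_left₀ _ hK]
    rw [e, hh]
    have := hx.2
    dsimp only
    gcongr
  have hh0 : Filter.Tendsto (fun z => b * h z * l) (nhds z0) (nhds 0) := by
    have hc : Continuous (fun z => b * h z * l) := by
      simp only [hh]; fun_prop
    have := hc.tendsto z0
    simpa [hh] using this
  set Bt : ℝ → R := fun x => B (max x 0) with hBt
  have hBtc : Continuous Bt :=
    hB.comp_continuous (by fun_prop) (fun x => mem_Ici.2 (le_max_right x 0))
  set G : ℝ → R := fun x => ∫ t in (0:ℝ)..x, Bt t with hG
  have hGd : ∀ x ∈ Ici (0:ℝ), HasDerivAt G (B x) x := by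
    intro x hx
    have := intervalIntegral.integral_hasDerivAt_right (hBtc.intervalIntegrable 0 x)
      (hBtc.stronglyMeasurableAtFilter _ _) hBtc.continuousAt
    simpa [hBt, max_eq_left (show (0:ℝ) ≤ x from hx)] using this
  have hg : ∀ z, ‖W l z - 1 - (z - z0) • G l‖ ≤ (b * h z * l) * ‖z - z0‖ := by
    intro z
    have := norm_image_sub_le_of_norm_deriv_right_le_segment
      (f := fun x => W x z - 1 - (z - z0) • G x) (a := 0) (b := l)
      (f' := fun x => (z - z0) • (B x * W x z) - (z - z0) • B x)
      (C := ‖z - z0‖ * (b * h z)) ?_ ?_ ?_ l ⟨hl, le_rfl⟩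
    · have e0 : W 0 z - 1 - (z - z0) • G 0 = 0 := by simp [hW0, hG]
      simp only [e0, sub_zero] at this
      refine this.trans (le_of_eq (by ring))
    · intro x hx
      exact (((hW z x hx.1).continuousWithinAt.mono Icc_subset_Ici_self).sub
        continuousWithinAt_const).sub ((hGd x hx.1).continuousAt.continuousWithinAt.fun_const_smul _)
    · intro x hx
      exact (((hW z x hx.1).mono (Ici_subset_Ici.2 hx.1)).sub_const _).sub
        ((hGd x hx.1).hasDerivWithinAt.fun_const_smul _)
    · intro x hx
      have hx' : x ∈ Icc (0:ℝ) l := ⟨hx.1, hx.2.le⟩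
      have e : (z - z0) • (B x * W x z) - (z - z0) • B x = (z - z0) • (B x * (W x z - 1)) := by
        rw [mul_sub, mul_one, smul_sub]
      rw [e, norm_smul]
      gcongr
      refine (norm_mul_le _ _).trans ?_
      gcongr
      · exact hb x hx'
      · exact hfh z x hx'
  have hWz0 : W l z0 = 1 := by
    have := hg z0
    simpa [sub_eq_zero] using this
  have hd : HasDerivAt (fun z => W l z) (G l) z0 := by
    rw [hasDerivAt_iff_isLittleO, Asymptotics.isLittleO_iff]
    intro c hc
    filter_upwards [hh0.eventually (gt_mem_nhds hc)] with z hz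
    rw [hWz0]
    refine (hg z).trans ?_
    gcongr
  exact (hd.const_mul U0).differentiableAt

section Holo

attribute [local instance] Matrix.linftyOpNormedRing Matrix.linftyOpNormedAlgebra

variable {ι : Type*} [Fintype ι] [DecidableEq ι]

lemma mat_hasDeriv_of_entries {f : ℝ → Matrix ι ι ℂ} {f' : Matrix ι ι ℂ} {s : Set ℝ} {x : ℝ}
    (h : ∀ i k, HasDerivWithinAt (fun y => f y i k) (f' i k) s x) :
    HasDerivWithinAt f f' s x := by
  have h1 : HasDerivWithinAt (fun y => ∑ i, ∑ k, (f y i k) • (Matrix.single i k (1:ℂ)))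
      (∑ i, ∑ k, (f' i k) • (Matrix.single i k (1:ℂ))) s x := by
    refine HasDerivWithinAt.fun_sum fun i _ => HasDerivWithinAt.fun_sum fun k _ => ?_
    exact (h i k).smul_const _
  have e : ∀ M : Matrix ι ι ℂ, (∑ i, ∑ k, (M i k) • (Matrix.single i k (1:ℂ))) = M := by
    intro M
    conv_rhs => rw [Matrix.matrix_eq_sum_single M]
    simp
  simpa only [e] using h1

noncomputable def entryL (𝕜 : Type*) [NontriviallyNormedField 𝕜] [CompleteSpace 𝕜]
    [NormedAlgebra 𝕜 ℂ] [FiniteDimensional 𝕜 (Matrix ι ι ℂ)]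
    (i k : ι) : Matrix ι ι ℂ →L[𝕜] ℂ :=
  LinearMap.toContinuousLinearMap
    { toFun := fun M => M i k, map_add' := fun _ _ => rfl, map_smul' := fun _ _ => rfl }

lemma mat_entry_hasDeriv {f : ℝ → Matrix ι ι ℂ} {f' : Matrix ι ι ℂ} {s : Set ℝ} {x : ℝ}
    (h : HasDerivWithinAt f f' s x) (i k : ι) :
    HasDerivWithinAt (fun y => f y i k) (f' i k) s x :=
  ((entryL (ι := ι) ℝ i k).hasFDerivAt.comp_hasDerivWithinAt x h)

lemma mat_conj_hasDeriv {f : ℝ → Matrix ι ι ℂ} {f' : Matrix ι ι ℂ} {s : Set ℝ} {x : ℝ}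
    (h : HasDerivWithinAt f f' s x) :
    HasDerivWithinAt (fun y => (f y)ᴴ) (f'ᴴ) s x := by
  apply mat_hasDeriv_of_entries
  intro i k
  exact (mat_entry_hasDeriv h k i).star

lemma jMat_sq (m₁ m₂ : ℕ) : jMat m₁ m₂ * jMat m₁ m₂ = 1 := by
  simp [jMat, Matrix.fromBlocks_multiply, Matrix.fromBlocks_one]

lemma jMat_conj (m₁ m₂ : ℕ) : (jMat m₁ m₂)ᴴ = jMat m₁ m₂ := by
  simp [jMat, Matrix.fromBlocks_conjTranspose]

lemma VMat_conj {m₁ m₂ : ℕ} (v : ℝ → Matrix (Fin m₁) (Fin m₂) ℂ) (x : ℝ) :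
    (VMat v x)ᴴ = VMat v x := by
  simp [VMat, Matrix.fromBlocks_conjTranspose]

/-- algebraic identity behind the Lagrange formula -/
lemma lagrange_alg {J V : Matrix ι ι ℂ} (hJ : J * J = 1) (hJc : Jᴴ = J) (hVc : Vᴴ = V)
    (X Y : Matrix ι ι ℂ) (w z : ℂ) :
    ((Complex.I • (w • J + J * V)) * X)ᴴ * J * Y
      + Xᴴ * J * ((Complex.I • (z • J + J * V)) * Y)
      = (Complex.I * (z - star w)) • (Xᴴ * Y) := by
  have e1 : ((Complex.I • (w • J + J * V)) * X)ᴴ * J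
      = (-Complex.I) • (Xᴴ * (star w • 1 + V)) := by
    have : (star w • J + V * J) * J = star w • (1 : Matrix ι ι ℂ) + V := by
      rw [add_mul, smul_mul_assoc, hJ, mul_assoc, hJ, mul_one]
    rw [Matrix.conjTranspose_mul, Matrix.conjTranspose_smul, Matrix.conjTranspose_add,
      Matrix.conjTranspose_smul, Matrix.conjTranspose_mul, hJc, hVc, mul_assoc,
      smul_mul_assoc, this, mul_smul_comm]
    simp
  have e2 : J * (Complex.I • (z • J + J * V)) = Complex.I • (z • (1 : Matrix ι ι ℂ) + V) := by
    rw [mul_smul_comm, mul_add, mul_smul_comm, hJ, ← mul_assoc, hJ, one_mul]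
  rw [e1, mul_assoc Xᴴ, ← mul_assoc J, e2]
  simp only [smul_mul_assoc, mul_smul_comm, mul_add, add_mul, mul_one, one_mul, smul_add, smul_smul,
    mul_sub, sub_smul, neg_mul, neg_smul, mul_assoc]
  abel

section U
variable {m₁ m₂ : ℕ}
    {v : ℝ → Matrix (Fin m₁) (Fin m₂) ℂ}
    {u : ℝ → ℂ → Matrix (Fin m₁ ⊕ Fin m₂) (Fin m₁ ⊕ Fin m₂) ℂ}

lemma u_lagrange
    (hux : ∀ z : ℂ, ∀ x ∈ Ici (0:ℝ), ∀ i k,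
      HasDerivWithinAt (fun y => u y z i k)
        (((Complex.I • (z • jMat m₁ m₂ + jMat m₁ m₂ * VMat v x)) * u x z) i k) (Ici (0:ℝ)) x)
    (w z : ℂ) (x : ℝ) (hx : x ∈ Ici (0:ℝ)) :
    HasDerivWithinAt (fun y => (u y w)ᴴ * jMat m₁ m₂ * u y z)
      ((Complex.I * (z - star w)) • ((u x w)ᴴ * u x z)) (Ici 0) x := by
  have h1 := mat_hasDeriv_of_entries (hux z x hx)
  have h2 := mat_conj_hasDeriv (mat_hasDeriv_of_entries (hux w x hx))
  have h3 := (h2.mul_const (jMat m₁ m₂)).mul h1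
  rw [lagrange_alg (jMat_sq m₁ m₂) (jMat_conj m₁ m₂) (VMat_conj v x)] at h3
  exact h3

lemma u_holo (hu0 : ∀ z : ℂ, u 0 z = 1)
    (hux : ∀ z : ℂ, ∀ x ∈ Ici (0:ℝ), ∀ i k,
      HasDerivWithinAt (fun y => u y z i k)
        (((Complex.I • (z • jMat m₁ m₂ + jMat m₁ m₂ * VMat v x)) * u x z) i k) (Ici (0:ℝ)) x)
    (l : ℝ) (hl : 0 ≤ l) (z0 : ℂ) (i k : Fin m₁ ⊕ Fin m₂) :
    DifferentiableAt ℂ (fun z => u l z i k) z0 := by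
  set J := jMat m₁ m₂ with hJ
  set W : ℝ → ℂ → Matrix (Fin m₁ ⊕ Fin m₂) (Fin m₁ ⊕ Fin m₂) ℂ :=
    fun x z => J * ((u x (star z0))ᴴ * J * u x z) with hW
  have hJJ : J * J = 1 := jMat_sq m₁ m₂
  have hd : ∀ z, ∀ x ∈ Ici (0:ℝ), HasDerivWithinAt (fun y => W y z)
      (J * ((Complex.I * (z - z0)) • ((u x (star z0))ᴴ * u x z))) (Ici 0) x := by
    intro z x hx
    have := (u_lagrange hux (star z0) z x hx).const_mul J
    rwa [star_star] at this
  have hW0 : ∀ z, W 0 z = 1 := by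
    intro z
    simp [hW, hu0, hJJ]
  have hWz : ∀ x ∈ Ici (0:ℝ), W x z0 = 1 := by
    intro x hx
    rw [← hW0 z0]
    refine constant_of_has_deriv_right_zero (f := fun y => W y z0) (a := 0) (b := x) ?_ ?_ x ⟨hx, le_rfl⟩
    · intro y hy
      exact (hd z0 y hy.1).continuousWithinAt.mono Icc_subset_Ici_self
    · intro y hy
      have := (hd z0 y hy.1).mono (Ici_subset_Ici.2 hy.1)
      simpa using this
  have hinv : ∀ x ∈ Ici (0:ℝ), ∀ z, u x z = u x z0 * W x z := by
    intro x hx z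
    have h1 : (J * ((u x (star z0))ᴴ * J)) * u x z0 = 1 := by
      rw [← hWz x hx, hW]; simp only [mul_assoc]
    rw [mul_eq_one_comm] at h1
    calc u x z = (u x z0 * (J * ((u x (star z0))ᴴ * J))) * u x z := by rw [h1, one_mul]
      _ = _ := by rw [hW]; simp only [mul_assoc]
  have key := mat_holo (u l z0)
    (fun x => Complex.I • (J * ((u x (star z0))ᴴ * u x z0))) ?_ W z0 hW0 ?_ l hl
  · have h2 : DifferentiableAt ℂ (fun z => u l z) z0 := by
      refine key.congr_of_eventuallyEq (Filter.Eventually.of_forall fun z => hinv l hl z)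
    exact (entryL (ι := Fin m₁ ⊕ Fin m₂) ℂ i k).differentiableAt.comp z0 h2
  · intro x hx
    have h1 := (mat_hasDeriv_of_entries (hux z0 x hx)).continuousWithinAt
    have h2 := (mat_conj_hasDeriv (mat_hasDeriv_of_entries (hux (star z0) x hx))).continuousWithinAt
    exact (continuousWithinAt_const.fun_mul (h2.fun_mul h1)).fun_const_smul _
  · intro z x hx
    have := hd z x hx
    have e : J * ((Complex.I * (z - z0)) • ((u x (star z0))ᴴ * u x z))
        = (z - z0) • (Complex.I • (J * ((u x (star z0))ᴴ * u x z0)) * W x z) := by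
      rw [hinv x hx z]
      simp only [smul_mul_assoc, mul_smul_comm, smul_smul, mul_assoc]
      rw [mul_comm Complex.I]
    rw [e] at this
    exact this

lemma inv_entry_holo {n : ℕ} {A : ℂ → Matrix (Fin n) (Fin n) ℂ} {z0 : ℂ}
    (hA : ∀ i k, DifferentiableAt ℂ (fun z => A z i k) z0) (hu : IsUnit (A z0)) (i k : Fin n) :
    DifferentiableAt ℂ (fun z => (A z)⁻¹ i k) z0 := by
  have hA' : DifferentiableAt ℂ A z0 := by
    have e : A = fun z => ∑ i, ∑ k, (A z i k) • (Matrix.single i k (1:ℂ)) := by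
      funext z
      conv_lhs => rw [Matrix.matrix_eq_sum_single (A z)]
      simp
    rw [e]
    refine DifferentiableAt.fun_sum fun i _ => DifferentiableAt.fun_sum fun k _ => ?_
    exact (hA i k).smul_const _
  obtain ⟨U, hU⟩ := hu
  have h1 : DifferentiableAt ℂ (fun z => Ring.inverse (A z)) z0 := by
    refine DifferentiableAt.fun_comp' z0 ?_ hA'
    rw [← hU]
    exact differentiableAt_inverse U.isUnit
  simp only [Matrix.nonsing_inv_eq_ringInverse]
  exact (entryL (ι := Fin n) ℂ i k).differentiableAt.comp z0 h1

end U
end Holo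
section Energy
variable {m₁ m₂ : ℕ}

noncomputable def Pn (y : Fin m₁ ⊕ Fin m₂ → ℂ) : ℝ := ∑ a, ‖y (Sum.inl a)‖ ^ 2
noncomputable def Qn (y : Fin m₁ ⊕ Fin m₂ → ℂ) : ℝ := ∑ a, ‖y (Sum.inr a)‖ ^ 2

lemma Pn_nonneg (y : Fin m₁ ⊕ Fin m₂ → ℂ) : 0 ≤ Pn y := Finset.sum_nonneg fun _ _ => by positivity
lemma Qn_nonneg (y : Fin m₁ ⊕ Fin m₂ → ℂ) : 0 ≤ Qn y := Finset.sum_nonneg fun _ _ => by positivity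

lemma norm_sub_sq_le' (a b : ℂ) : ‖a - b‖ ^ 2 ≤ 2 * ‖a‖ ^ 2 + 2 * ‖b‖ ^ 2 := by
  have h := norm_sub_le a b
  have h0 := norm_nonneg (a - b)
  nlinarith [sq_nonneg (‖a‖ - ‖b‖)]

lemma PQ_sub_le (y w : Fin m₁ ⊕ Fin m₂ → ℂ) :
    Pn (y - w) + Qn (y - w) ≤ 2 * (Pn y + Qn y) + 2 * (Pn w + Qn w) := by
  have h1 : Pn (y - w) ≤ 2 * Pn y + 2 * Pn w := by
    simp only [Pn, Finset.mul_sum, ← Finset.sum_add_distrib, Pi.sub_apply]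
    exact Finset.sum_le_sum fun _ _ => norm_sub_sq_le' _ _
  have h2 : Qn (y - w) ≤ 2 * Qn y + 2 * Qn w := by
    simp only [Qn, Finset.mul_sum, ← Finset.sum_add_distrib, Pi.sub_apply]
    exact Finset.sum_le_sum fun _ _ => norm_sub_sq_le' _ _
  linarith

lemma continuous_Pn : Continuous (Pn : (Fin m₁ ⊕ Fin m₂ → ℂ) → ℝ) := by
  unfold Pn; fun_prop
lemma continuous_Qn : Continuous (Qn : (Fin m₁ ⊕ Fin m₂ → ℂ) → ℝ) := by
  unfold Qn; fun_prop

lemma re_star_mul_self' (a : ℂ) : (star a * a).re = ‖a‖ ^ 2 := by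
  rw [← Complex.normSq_eq_norm_sq, Complex.normSq_apply]; simp

lemma re_quad_one (U : Matrix (Fin m₁ ⊕ Fin m₂) (Fin m₁ ⊕ Fin m₂) ℂ) (c : Fin m₁ ⊕ Fin m₂ → ℂ) :
    (star c ⬝ᵥ ((Uᴴ * U) *ᵥ c)).re = Pn (U *ᵥ c) + Qn (U *ᵥ c) := by
  rw [← Matrix.mulVec_mulVec, Matrix.dotProduct_mulVec, ← Matrix.star_mulVec]
  simp only [dotProduct, Fintype.sum_sum_type, Pi.star_apply, Complex.add_re, Complex.re_sum,
    re_star_mul_self', Pn, Qn]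

lemma re_quad_j (U : Matrix (Fin m₁ ⊕ Fin m₂) (Fin m₁ ⊕ Fin m₂) ℂ) (c : Fin m₁ ⊕ Fin m₂ → ℂ) :
    (star c ⬝ᵥ ((Uᴴ * jMat m₁ m₂ * U) *ᵥ c)).re = Pn (U *ᵥ c) - Qn (U *ᵥ c) := by
  rw [mul_assoc, ← Matrix.mulVec_mulVec, Matrix.dotProduct_mulVec, ← Matrix.star_mulVec,
    ← Matrix.mulVec_mulVec]
  generalize U *ᵥ c = y
  have hl : ∀ a, (jMat m₁ m₂ *ᵥ y) (Sum.inl a) = y (Sum.inl a) := by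
    intro a; simp [jMat, Matrix.fromBlocks_mulVec]
  have hr : ∀ a, (jMat m₁ m₂ *ᵥ y) (Sum.inr a) = - y (Sum.inr a) := by
    intro a; simp [jMat, Matrix.fromBlocks_mulVec, Matrix.neg_mulVec]
  simp only [dotProduct, Fintype.sum_sum_type, Pi.star_apply, Complex.add_re, Complex.re_sum,
    hl, hr, mul_neg, Complex.neg_re, re_star_mul_self', Pn, Qn, Finset.sum_neg_distrib]
  ring

attribute [local instance] Matrix.linftyOpNormedRing Matrix.linftyOpNormedAlgebra

noncomputable def quadL (c : Fin m₁ ⊕ Fin m₂ → ℂ) :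
    Matrix (Fin m₁ ⊕ Fin m₂) (Fin m₁ ⊕ Fin m₂) ℂ →L[ℝ] ℝ :=
  LinearMap.toContinuousLinearMap
    { toFun := fun M => (star c ⬝ᵥ (M *ᵥ c)).re
      map_add' := fun M N => by simp [Matrix.add_mulVec, dotProduct_add]
      map_smul' := fun r M => by simp [Matrix.smul_mulVec, dotProduct_smul] }

variable {v : ℝ → Matrix (Fin m₁) (Fin m₂) ℂ}
    {u : ℝ → ℂ → Matrix (Fin m₁ ⊕ Fin m₂) (Fin m₁ ⊕ Fin m₂) ℂ}

lemma energy_deriv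
    (hux : ∀ z : ℂ, ∀ x ∈ Ici (0:ℝ), ∀ i k,
      HasDerivWithinAt (fun y => u y z i k)
        (((Complex.I • (z • jMat m₁ m₂ + jMat m₁ m₂ * VMat v x)) * u x z) i k) (Ici (0:ℝ)) x)
    (z : ℂ) (c : Fin m₁ ⊕ Fin m₂ → ℂ) (x : ℝ) (hx : x ∈ Ici (0:ℝ)) :
    HasDerivWithinAt (fun y => Pn (u y z *ᵥ c) - Qn (u y z *ᵥ c))
      (-(2 * z.im) * (Pn (u x z *ᵥ c) + Qn (u x z *ᵥ c))) (Ici 0) x := by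
  have h := u_lagrange hux z z x hx
  have e : (Complex.I * (z - star z)) • ((u x z)ᴴ * u x z) = (-(2 * z.im) : ℝ) • ((u x z)ᴴ * u x z) := by
    have : Complex.I * (z - star z) = ((-(2 * z.im) : ℝ) : ℂ) := by
      apply Complex.ext <;> simp <;> ring
    rw [this, Complex.coe_smul]
  rw [e] at h
  have h2 := (quadL c).hasFDerivAt.comp_hasDerivWithinAt x h
  have e3 : (quadL c) ((-(2 * z.im) : ℝ) • ((u x z)ᴴ * u x z))
      = -(2 * z.im) * (Pn (u x z *ᵥ c) + Qn (u x z *ᵥ c)) := by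
    change (star c ⬝ᵥ (((-(2 * z.im) : ℝ) • ((u x z)ᴴ * u x z)) *ᵥ c)).re = _
    rw [Matrix.smul_mulVec, dotProduct_smul, Complex.smul_re, re_quad_one, smul_eq_mul]
  have h2 : HasDerivWithinAt (fun y => quadL c ((u y z)ᴴ * jMat m₁ m₂ * u y z))
      (-(2 * z.im) * (Pn (u x z *ᵥ c) + Qn (u x z *ᵥ c))) (Ici 0) x := e3 ▸ h2
  refine h2.congr_of_eventuallyEq (Filter.Eventually.of_forall fun y => (re_quad_j _ _).symm) (re_quad_j _ _).symm

end Energy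

section Cons
variable {m₁ m₂ : ℕ} {u : ℝ → ℂ → Matrix (Fin m₁ ⊕ Fin m₂) (Fin m₁ ⊕ Fin m₂) ℂ}

/-- what we retain of the ODE -/
structure Good (u : ℝ → ℂ → Matrix (Fin m₁ ⊕ Fin m₂) (Fin m₁ ⊕ Fin m₂) ℂ) : Prop where
  zero : ∀ z, u 0 z = 1
  cont : ∀ z, ∀ i k, ContinuousOn (fun x => u x z i k) (Ici 0)
  holo : ∀ l, 0 ≤ l → ∀ z i k, DifferentiableAt ℂ (fun z => u l z i k) z
  energy : ∀ z c, ∀ x ∈ Ici (0:ℝ), HasDerivWithinAt (fun y => Pn (u y z *ᵥ c) - Qn (u y z *ᵥ c))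
      (-(2 * z.im) * (Pn (u x z *ᵥ c) + Qn (u x z *ᵥ c))) (Ici 0) x

lemma Good.contVec (h : Good u) (z : ℂ) (c) : ContinuousOn (fun x => u x z *ᵥ c) (Ici 0) := by
  rw [continuousOn_pi]
  intro i
  simp only [Matrix.mulVec, dotProduct]
  exact continuousOn_finsetSum _ fun k _ => (h.cont z i k).mul continuousOn_const

lemma Good.contPQ (h : Good u) (z : ℂ) (c) :
    ContinuousOn (fun x => Pn (u x z *ᵥ c) + Qn (u x z *ᵥ c)) (Ici 0) :=
  (continuous_Pn.comp_continuousOn (h.contVec z c)).add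
    (continuous_Qn.comp_continuousOn (h.contVec z c))

lemma Good.int (h : Good u) (z : ℂ) (c) {l : ℝ} (hl : 0 ≤ l) :
    2 * z.im * ∫ x in (0:ℝ)..l, (Pn (u x z *ᵥ c) + Qn (u x z *ᵥ c)) =
      (Pn c - Qn c) - (Pn (u l z *ᵥ c) - Qn (u l z *ᵥ c)) := by
  have hc : ContinuousOn (fun x => -(2 * z.im) * (Pn (u x z *ᵥ c) + Qn (u x z *ᵥ c))) (Icc 0 l) :=
    (continuousOn_const.mul (h.contPQ z c)).mono Icc_subset_Ici_self
  have := intervalIntegral.integral_eq_sub_of_hasDeriv_right_of_le hl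
    (f := fun y => Pn (u y z *ᵥ c) - Qn (u y z *ᵥ c))
    (f' := fun x => -(2 * z.im) * (Pn (u x z *ᵥ c) + Qn (u x z *ᵥ c)))
    (fun x hx => (h.energy z c x hx.1).continuousWithinAt.mono Icc_subset_Ici_self)
    (fun x hx => (h.energy z c x hx.1.le).mono (fun y hy => hx.1.le.trans (le_of_lt hy)))
    (hc.intervalIntegrable_of_Icc hl)
  rw [intervalIntegral.integral_const_mul] at this
  simp only [h.zero, Matrix.one_mulVec] at this
  linarith

lemma Good.anti (h : Good u) {z : ℂ} (hz : 0 < z.im) (c) :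
    AntitoneOn (fun y => Pn (u y z *ᵥ c) - Qn (u y z *ᵥ c)) (Ici 0) := by
  apply antitoneOn_of_deriv_nonpos (convex_Ici 0)
  · exact fun x hx => (h.energy z c x hx).continuousWithinAt
  · intro x hx
    exact ((h.energy z c x (interior_subset hx)).hasDerivAt
      (mem_interior_iff_mem_nhds.1 hx)).differentiableAt.differentiableWithinAt
  · intro x hx
    rw [((h.energy z c x (interior_subset hx)).hasDerivAt
      (mem_interior_iff_mem_nhds.1 hx)).deriv]
    have := Pn_nonneg (u x z *ᵥ c)
    have := Qn_nonneg (u x z *ᵥ c)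
    have : 0 ≤ z.im * (Pn (u x z *ᵥ c) + Qn (u x z *ᵥ c)) := by positivity
    linarith

lemma Pn_inr (w : Fin m₂ → ℂ) : Pn (Sum.elim (0 : Fin m₁ → ℂ) w) = 0 := by simp [Pn]

/-- lower bound for `(0,w)` -/
lemma Good.lower (h : Good u) {z : ℂ} (hz : 0 < z.im) (w : Fin m₂ → ℂ) {x : ℝ} (hx : 0 ≤ x) :
    Qn (Sum.elim (0 : Fin m₁ → ℂ) w) ≤ Pn (u x z *ᵥ Sum.elim 0 w) + Qn (u x z *ᵥ Sum.elim 0 w) := by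
  have := h.anti hz (Sum.elim 0 w) (mem_Ici.2 le_rfl) (mem_Ici.2 hx) hx
  simp only [h.zero, Matrix.one_mulVec, Pn_inr] at this
  have := Pn_nonneg (u x z *ᵥ Sum.elim 0 w)
  linarith

lemma Qn_eq_zero {w : Fin m₂ → ℂ} (h : Qn (Sum.elim (0 : Fin m₁ → ℂ) w) = 0) : w = 0 := by
  simp only [Qn, Sum.elim_inr] at h
  rw [Finset.sum_eq_zero_iff_of_nonneg (fun _ _ => by positivity)] at h
  funext i
  simpa using h i (Finset.mem_univ i)

lemma mulVec_inr (U : Matrix (Fin m₁ ⊕ Fin m₂) (Fin m₁ ⊕ Fin m₂) ℂ) (ξ : Fin m₁ → ℂ)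
    (w : Fin m₂ → ℂ) (b : Fin m₂) : (U *ᵥ Sum.elim ξ w) (Sum.inr b)
      = (U.toBlocks₂₁ *ᵥ ξ) b + (U.toBlocks₂₂ *ᵥ w) b := by
  simp [Matrix.mulVec, dotProduct, Matrix.toBlocks₂₁, Matrix.toBlocks₂₂]

lemma Good.isUnit (h : Good u) {z : ℂ} (hz : 0 < z.im) {l : ℝ} (hl : 0 ≤ l) :
    IsUnit (u l z).toBlocks₂₂ := by
  rw [← Matrix.mulVec_injective_iff_isUnit]
  intro w1 w2 hw
  have hq : Qn (u l z *ᵥ Sum.elim 0 (w1 - w2)) = 0 := by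
    simp only [Qn, mulVec_inr, Matrix.mulVec_sub, Matrix.mulVec_zero]
    simp [hw]
  have := h.anti hz (Sum.elim 0 (w1 - w2)) (mem_Ici.2 le_rfl) (mem_Ici.2 hl) hl
  simp only [h.zero, Matrix.one_mulVec, Pn_inr, hq] at this
  have h1 := Pn_nonneg (u l z *ᵥ Sum.elim 0 (w1 - w2))
  have h2 := Qn_nonneg (Sum.elim (0 : Fin m₁ → ℂ) (w1 - w2))
  have h3 : Qn (Sum.elim (0 : Fin m₁ → ℂ) (w1 - w2)) = 0 := by linarith
  exact sub_eq_zero.1 (Qn_eq_zero h3)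

noncomputable def phiL (u : ℝ → ℂ → Matrix (Fin m₁ ⊕ Fin m₂) (Fin m₁ ⊕ Fin m₂) ℂ)
    (l : ℝ) (z : ℂ) : Matrix (Fin m₂) (Fin m₁) ℂ :=
  -((u l z).toBlocks₂₂⁻¹ * (u l z).toBlocks₂₁)

lemma Good.phiL_holo (h : Good u) {z : ℂ} (hz : 0 < z.im) {l : ℝ} (hl : 0 ≤ l) (i k) :
    DifferentiableAt ℂ (fun z => phiL u l z i k) z := by
  simp only [phiL, Matrix.neg_apply, Matrix.mul_apply]
  refine (DifferentiableAt.fun_sum fun a _ => ?_).fun_neg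
  refine DifferentiableAt.fun_mul ?_ ?_
  · exact inv_entry_holo (fun i k => h.holo l hl z _ _) (h.isUnit hz hl) i a
  · exact h.holo l hl z _ _

/-- the column `[I; φ] e_k` -/
noncomputable def cv (φ : Matrix (Fin m₂) (Fin m₁) ℂ) (k : Fin m₁) : Fin m₁ ⊕ Fin m₂ → ℂ :=
  Sum.elim (Pi.single k 1) (fun i => φ i k)

lemma Pn_cv (φ : Matrix (Fin m₂) (Fin m₁) ℂ) (k : Fin m₁) : Pn (cv φ k) = 1 := by
  simp only [Pn, cv, Sum.elim_inl]
  rw [Finset.sum_eq_single k]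
  · simp
  · intro b _ hb; simp [hb]
  · simp

lemma cv_sub (φ ψ : Matrix (Fin m₂) (Fin m₁) ℂ) (k : Fin m₁) :
    cv φ k - cv ψ k = Sum.elim (0 : Fin m₁ → ℂ) (fun i => φ i k - ψ i k) := by
  funext i
  rcases i with i | i <;> simp [cv]

lemma Good.phiL_Q (h : Good u) {z : ℂ} (hz : 0 < z.im) {l : ℝ} (hl : 0 ≤ l) (k) :
    Qn (u l z *ᵥ cv (phiL u l z) k) = 0 := by
  have e : (fun i => phiL u l z i k) = -((u l z).toBlocks₂₂⁻¹ *ᵥ ((u l z).toBlocks₂₁ *ᵥ Pi.single k 1)) := by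
    funext i
    rw [Matrix.mulVec_mulVec]
    simp [phiL]
  have hu := h.isUnit hz hl
  rw [Matrix.isUnit_iff_isUnit_det] at hu
  simp only [Qn, cv, mulVec_inr, e, Matrix.mulVec_neg, Matrix.mulVec_mulVec]
  rw [← Matrix.mul_assoc, Matrix.mul_nonsing_inv _ hu]
  simp

lemma Good.phiL_nonneg (h : Good u) {z : ℂ} (hz : 0 < z.im) {x l : ℝ} (hx : 0 ≤ x) (hxl : x ≤ l) (k) :
    0 ≤ Pn (u x z *ᵥ cv (phiL u l z) k) - Qn (u x z *ᵥ cv (phiL u l z) k) := by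
  have := h.anti hz (cv (phiL u l z) k) (mem_Ici.2 hx) (mem_Ici.2 (hx.trans hxl)) hxl
  simp only [h.phiL_Q hz (hx.trans hxl)] at this
  have h1 := Pn_nonneg (u l z *ᵥ cv (phiL u l z) k)
  linarith

lemma Good.int_le (h : Good u) {z : ℂ} (hz : 0 < z.im) (φ : Matrix (Fin m₂) (Fin m₁) ℂ)
    {l : ℝ} (hl : 0 ≤ l) (k)
    (hp : 0 ≤ Pn (u l z *ᵥ cv φ k) - Qn (u l z *ᵥ cv φ k)) :
    ∫ x in (0:ℝ)..l, (Pn (u x z *ᵥ cv φ k) + Qn (u x z *ᵥ cv φ k)) ≤ 1 / (2 * z.im) := by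
  have h1 := h.int z (cv φ k) hl
  have h2 := Qn_nonneg (cv φ k)
  rw [Pn_cv] at h1
  rw [le_div_iff₀ (by positivity)]
  linarith

lemma Good.diam (h : Good u) {z : ℂ} (hz : 0 < z.im) (φ ψ : Matrix (Fin m₂) (Fin m₁) ℂ)
    {l : ℝ} (hl : 0 ≤ l) (k)
    (hp : 0 ≤ Pn (u l z *ᵥ cv φ k) - Qn (u l z *ᵥ cv φ k))
    (hq : 0 ≤ Pn (u l z *ᵥ cv ψ k) - Qn (u l z *ᵥ cv ψ k)) (i : Fin m₂) :
    l * ‖φ i k - ψ i k‖ ^ 2 ≤ 2 / z.im := by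
  set w : Fin m₂ → ℂ := fun i => φ i k - ψ i k with hw
  have h1 : ‖φ i k - ψ i k‖ ^ 2 ≤ Qn (Sum.elim (0 : Fin m₁ → ℂ) w) := by
    simp only [Qn, Sum.elim_inr]
    exact Finset.single_le_sum (f := fun i => ‖w i‖ ^ 2) (fun _ _ => by positivity) (Finset.mem_univ i)
  have ii : ∀ φ : Matrix (Fin m₂) (Fin m₁) ℂ, IntervalIntegrable
      (fun x => Pn (u x z *ᵥ cv φ k) + Qn (u x z *ᵥ cv φ k)) volume 0 l := fun φ =>
    ((h.contPQ z (cv φ k)).mono Icc_subset_Ici_self).intervalIntegrable_of_Icc hl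
  have h2 : ∫ x in (0:ℝ)..l, Qn (Sum.elim (0 : Fin m₁ → ℂ) w) ≤
      ∫ x in (0:ℝ)..l, (2 * (Pn (u x z *ᵥ cv φ k) + Qn (u x z *ᵥ cv φ k))
        + 2 * (Pn (u x z *ᵥ cv ψ k) + Qn (u x z *ᵥ cv ψ k))) := by
    apply intervalIntegral.integral_mono_on hl (by simp)
      (((ii φ).const_mul 2).add ((ii ψ).const_mul 2))
    intro x hx
    refine (h.lower hz w hx.1).trans ?_
    rw [hw, ← cv_sub, Matrix.mulVec_sub]
    exact PQ_sub_le _ _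
  rw [intervalIntegral.integral_add ((ii φ).const_mul 2) ((ii ψ).const_mul 2),
    intervalIntegral.integral_const_mul, intervalIntegral.integral_const_mul,
    intervalIntegral.integral_const, sub_zero, smul_eq_mul] at h2
  have h3 := h.int_le hz φ hl k hp
  have h4 := h.int_le hz ψ hl k hq
  have h5 : 2 / z.im = 2 * (1 / (2 * z.im)) + 2 * (1 / (2 * z.im)) := by field_simp; norm_num
  have h6 := mul_le_mul_of_nonneg_left h1 hl
  linarith

lemma Good.exists_weyl (h : Good u) : ∃ φ : ℂ → Matrix (Fin m₂) (Fin m₁) ℂ,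
    (∀ i j, DifferentiableOn ℂ (fun z => φ z i j) {z : ℂ | 0 < z.im}) ∧
    ∀ z : ℂ, 0 < z.im → ∀ k, ∀ x, 0 ≤ x →
      0 ≤ Pn (u x z *ᵥ cv (φ z) k) - Qn (u x z *ᵥ cv (φ z) k) := by
  have hdiam : ∀ z : ℂ, 0 < z.im → ∀ i k, ∀ n m : ℕ, n ≤ m →
      (n:ℝ) * ‖phiL u n z i k - phiL u m z i k‖ ^ 2 ≤ 2 / z.im := by
    intro z hz i k n m hnm
    exact h.diam hz _ _ n.cast_nonneg k (h.phiL_nonneg hz n.cast_nonneg le_rfl k)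
      (h.phiL_nonneg hz n.cast_nonneg (by exact_mod_cast hnm) k) i
  have hex : ∀ z : ℂ, ∀ i k, ∃ a : ℂ, 0 < z.im →
      Filter.Tendsto (fun n : ℕ => phiL u n z i k) Filter.atTop (nhds a) := by
    intro z i k
    by_cases hz : 0 < z.im
    · have : CauchySeq (fun n : ℕ => phiL u n z i k) := by
        rw [Metric.cauchySeq_iff']
        intro ε hε
        obtain ⟨N, hN⟩ := exists_nat_gt (2 / z.im / ε ^ 2)
        refine ⟨N, fun n hn => ?_⟩
        rw [dist_comm, dist_eq_norm]
        have h1 := hdiam z hz i k N n hn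
        rw [div_lt_iff₀ (by positivity)] at hN
        have hN0 : (0:ℝ) ≤ N := N.cast_nonneg
        by_contra! hcon
        have : ε ^ 2 ≤ ‖phiL u N z i k - phiL u n z i k‖ ^ 2 := by gcongr
        nlinarith
      obtain ⟨a, ha⟩ := cauchySeq_tendsto_of_complete this
      exact ⟨a, fun _ => ha⟩
    · exact ⟨0, fun h => absurd h hz⟩
  choose f hf using hex
  refine ⟨fun z => Matrix.of (f z), ?_, ?_⟩
  · intro i k
    have hlim : ∀ z : ℂ, 0 < z.im → ∀ n : ℕ, (n:ℝ) * ‖phiL u n z i k - f z i k‖ ^ 2 ≤ 2 / z.im := by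
      intro z hz n
      have ht : Filter.Tendsto (fun m : ℕ => (n:ℝ) * ‖phiL u n z i k - phiL u m z i k‖ ^ 2)
          Filter.atTop (nhds ((n:ℝ) * ‖phiL u n z i k - f z i k‖ ^ 2)) :=
        (((tendsto_const_nhds.sub (hf z i k hz)).norm).pow 2).const_mul _
      exact le_of_tendsto ht (Filter.eventually_atTop.2 ⟨n, fun m hm => hdiam z hz i k n m hm⟩)
    have hopen : IsOpen {z : ℂ | 0 < z.im} := isOpen_lt continuous_const Complex.continuous_im
    have hloc : TendstoLocallyUniformlyOn (fun (n : ℕ) z => phiL u n z i k) (fun z => f z i k)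
        Filter.atTop {z : ℂ | 0 < z.im} := by
      rw [Metric.tendstoLocallyUniformlyOn_iff]
      intro ε hε z0 hz0
      have hz0' : 0 < z0.im := hz0
      refine ⟨{z : ℂ | z0.im / 2 < z.im}, ?_, ?_⟩
      · exact mem_nhdsWithin_of_mem_nhds
          ((isOpen_lt continuous_const Complex.continuous_im).mem_nhds (half_lt_self hz0'))
      · obtain ⟨N, hN⟩ := exists_nat_gt (2 / (z0.im / 2) / ε ^ 2)
        filter_upwards [Filter.eventually_ge_atTop N] with n hn z hz
        have hz' : z0.im / 2 < z.im := hz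
        have hzp : 0 < z.im := by linarith
        rw [dist_comm, dist_eq_norm]
        have h1 := hlim z hzp n
        have h2 : 2 / z.im ≤ 2 / (z0.im / 2) := by gcongr
        rw [div_lt_iff₀ (by positivity)] at hN
        have hN0 : (N:ℝ) ≤ n := by exact_mod_cast hn
        have hN1 : (0:ℝ) ≤ N := N.cast_nonneg
        by_contra! hcon
        have : ε ^ 2 ≤ ‖phiL u n z i k - f z i k‖ ^ 2 := by gcongr
        have : N * ε ^ 2 ≤ n * ‖phiL u n z i k - f z i k‖ ^ 2 := by gcongr
        linarith
    exact hloc.differentiableOn (Filter.Eventually.of_forall fun n z hz =>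
      (h.phiL_holo hz n.cast_nonneg i k).differentiableWithinAt) hopen
  · intro z hz k x hx
    have hcv : Filter.Tendsto (fun n : ℕ => cv (phiL u n z) k) Filter.atTop
        (nhds (cv (Matrix.of (f z)) k)) := by
      rw [tendsto_pi_nhds]
      intro a
      rcases a with a | a
      · simp only [cv, Sum.elim_inl]; exact tendsto_const_nhds
      · simp only [cv, Sum.elim_inr]; exact hf z a k hz
    have hc : Continuous (fun c => Pn (u x z *ᵥ c) - Qn (u x z *ᵥ c)) := by
      have : Continuous (fun c => u x z *ᵥ c) := by fun_prop
      exact (continuous_Pn.comp this).sub (continuous_Qn.comp this)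
    refine ge_of_tendsto ((hc.tendsto _).comp hcv) ?_
    obtain ⟨N, hN⟩ := exists_nat_ge x
    filter_upwards [Filter.eventually_ge_atTop N] with n hn
    exact h.phiL_nonneg hz hx (hN.trans (by exact_mod_cast hn)) k

lemma fromRows_col (φ : Matrix (Fin m₂) (Fin m₁) ℂ) (U : Matrix (Fin m₁ ⊕ Fin m₂) (Fin m₁ ⊕ Fin m₂) ℂ)
    (i k : Fin m₁) :
    ((Matrix.fromRows (1 : Matrix (Fin m₁) (Fin m₁) ℂ) φ)ᴴ * Uᴴ * U *
        Matrix.fromRows (1 : Matrix (Fin m₁) (Fin m₁) ℂ) φ) i k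
      = ∑ a, star ((U *ᵥ cv φ i) a) * (U *ᵥ cv φ k) a := by
  have e : ∀ k a, (U * Matrix.fromRows (1 : Matrix (Fin m₁) (Fin m₁) ℂ) φ) a k = (U *ᵥ cv φ k) a := by
    intro k a
    simp [Matrix.mul_apply, Matrix.mulVec, dotProduct, cv, Matrix.one_apply, Pi.single_apply]
  rw [Matrix.mul_assoc, ← Matrix.conjTranspose_mul, Matrix.mul_apply]
  simp only [Matrix.conjTranspose_apply, e]

lemma PQ_sum (y : Fin m₁ ⊕ Fin m₂ → ℂ) : Pn y + Qn y = ∑ a, ‖y a‖ ^ 2 := by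
  simp [Pn, Qn, Fintype.sum_sum_type]

lemma Good.isWeyl (h : Good u) {φ : ℂ → Matrix (Fin m₂) (Fin m₁) ℂ}
    (h1 : ∀ i j, DifferentiableOn ℂ (fun z => φ z i j) {z : ℂ | 0 < z.im})
    (h2 : ∀ z : ℂ, 0 < z.im → ∀ k, ∀ x, 0 ≤ x →
      0 ≤ Pn (u x z *ᵥ cv (φ z) k) - Qn (u x z *ᵥ cv (φ z) k)) : IsWeylFunction u φ := by
  refine ⟨h1, fun z hz i k => ?_⟩
  have hint : ∀ k, IntegrableOn (fun x => Pn (u x z *ᵥ cv (φ z) k) + Qn (u x z *ᵥ cv (φ z) k)) (Ici 0) := by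
    intro k
    rw [integrableOn_Ici_iff_integrableOn_Ioi]
    refine integrableOn_Ioi_of_intervalIntegral_norm_bounded (l := Filter.atTop) (b := fun n : ℕ => (n:ℝ))
      (1 / (2 * z.im)) 0 ?_ tendsto_natCast_atTop_atTop ?_
    · intro n
      exact (((h.contPQ z _).mono Icc_subset_Ici_self).integrableOn_Icc).mono_set Ioc_subset_Icc_self
    · refine Filter.Eventually.of_forall fun n => ?_
      have e : ∀ x, ‖Pn (u x z *ᵥ cv (φ z) k) + Qn (u x z *ᵥ cv (φ z) k)‖
          = Pn (u x z *ᵥ cv (φ z) k) + Qn (u x z *ᵥ cv (φ z) k) := fun x =>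
        Real.norm_of_nonneg (add_nonneg (Pn_nonneg _) (Qn_nonneg _))
      simp only [e]
      exact h.int_le hz _ n.cast_nonneg k (h2 z hz k n n.cast_nonneg)
  simp only [fromRows_col]
  refine Integrable.mono' (g := fun x => (Pn (u x z *ᵥ cv (φ z) i) + Qn (u x z *ᵥ cv (φ z) i))
    + (Pn (u x z *ᵥ cv (φ z) k) + Qn (u x z *ᵥ cv (φ z) k))) ((hint i).add (hint k)) ?_ ?_
  · refine ContinuousOn.aestronglyMeasurable ?_ measurableSet_Ici
    refine continuousOn_finsetSum _ fun a _ => ?_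
    exact ((continuousOn_pi.1 (h.contVec z _) a).star).mul (continuousOn_pi.1 (h.contVec z _) a)
  · refine Filter.Eventually.of_forall fun x => ?_
    rw [PQ_sum, PQ_sum, ← Finset.sum_add_distrib]
    refine norm_sum_le_of_le _ fun a _ => ?_
    rw [norm_mul, norm_star]
    nlinarith [sq_nonneg (‖(u x z *ᵥ cv (φ z) i) a‖ - ‖(u x z *ᵥ cv (φ z) k) a‖),
      sq_nonneg (‖(u x z *ᵥ cv (φ z) i) a‖), sq_nonneg ‖(u x z *ᵥ cv (φ z) k) a‖]

lemma weyl_int {φ : ℂ → Matrix (Fin m₂) (Fin m₁) ℂ} (hφ : IsWeylFunction u φ) {z : ℂ}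
    (hz : 0 < z.im) (k) :
    IntegrableOn (fun x => Pn (u x z *ᵥ cv (φ z) k) + Qn (u x z *ᵥ cv (φ z) k)) (Ici 0) := by
  have := (hφ.2 z hz k k).re
  refine this.congr (Filter.Eventually.of_forall fun x => ?_)
  simp only [fromRows_col]
  rw [PQ_sum]
  simp only [Complex.re_sum, RCLike.re_eq_complex_re, re_star_mul_self']

lemma Good.unique (h : Good u) {φ ψ : ℂ → Matrix (Fin m₂) (Fin m₁) ℂ}
    (hφ : IsWeylFunction u φ) (hψ : IsWeylFunction u ψ) {z : ℂ} (hz : 0 < z.im) : ψ z = φ z := by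
  ext i k
  set w : Fin m₂ → ℂ := fun i => ψ z i k - φ z i k with hw
  have h1 : IntegrableOn (fun _ : ℝ => Qn (Sum.elim (0 : Fin m₁ → ℂ) w)) (Ici 0) := by
    refine Integrable.mono' (((weyl_int hψ hz k).const_mul 2).add ((weyl_int hφ hz k).const_mul 2))
      aestronglyMeasurable_const ?_
    refine (ae_restrict_mem measurableSet_Ici).mono fun x hx => ?_
    rw [Real.norm_of_nonneg (Qn_nonneg _)]
    refine (h.lower hz w hx).trans ?_
    rw [hw, ← cv_sub, Matrix.mulVec_sub]
    exact PQ_sub_le _ _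
  rw [integrableOn_const_iff] at h1
  have h2 : Qn (Sum.elim (0 : Fin m₁ → ℂ) w) = 0 := by
    rcases h1 with h1 | h1
    · simpa using h1
    · simp at h1
  exact sub_eq_zero.1 (congrFun (Qn_eq_zero h2) i)

end Cons

/-- A Dirac system `y_x = i(zj + jV)y` on `[0,∞)` with locally integrable
potential `v` has exactly one Weyl function (unique as a function on `ℂ₊`). -/
theorem weyl_function_exists_unique {m₁ m₂ : ℕ}
    (v : ℝ → Matrix (Fin m₁) (Fin m₂) ℂ)
    (hv : ∀ i j, LocallyIntegrableOn (fun x => v x i j) (Ici 0))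
    (u : ℝ → ℂ → Matrix (Fin m₁ ⊕ Fin m₂) (Fin m₁ ⊕ Fin m₂) ℂ)
    (hu0 : ∀ z : ℂ, u 0 z = 1)
    (hux : ∀ z : ℂ, ∀ x ∈ Ici (0:ℝ), ∀ i k,
      HasDerivWithinAt (fun y => u y z i k)
        (((Complex.I • (z • jMat m₁ m₂ + jMat m₁ m₂ * VMat v x)) * u x z) i k) (Ici (0:ℝ)) x) :
    ∃ φ : ℂ → Matrix (Fin m₂) (Fin m₁) ℂ, IsWeylFunction u φ ∧
      ∀ ψ : ℂ → Matrix (Fin m₂) (Fin m₁) ℂ, IsWeylFunction u ψ →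
        ∀ z : ℂ, 0 < z.im → ψ z = φ z := by
  have h : Good u := by
    refine ⟨hu0, ?_, fun l hl z i k => u_holo hu0 hux l hl z i k,
      fun z c x hx => energy_deriv hux z c x hx⟩
    intro z i k x hx
    exact (hux z x hx i k).continuousWithinAt
  obtain ⟨φ, h1, h2⟩ := h.exists_weyl
  have hφ := h.isWeyl h1 h2
  exact ⟨φ, hφ, fun ψ hψ z hz => h.unique hφ hψ hz⟩
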